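/- arXiv:1411.6354 — 3 statements merged into one kernel-verified Lean document; each statement's English description precedes it below -/
import Mathlib

section
/- Let w be a bounded weight structure on a triangulated category C, let M ∈ C_{w≥0} and N ∈ C_{w=0}, and choose a weight complex t(M) = (M^i) of M. Then the abelian group Hom_C(N, M) is isomorphic to the zeroth homology of the complex of abelian groups (Hom_{Hw}(N, M^i))_{i∈ℤ}, i.e., to ker(Hom(N, M^0) → Hom(N, M^1)) / im(Hom(N, M^{−1}) → Hom(N, M^0)), where the maps are induced by the boundary morphisms of t(M). -/
/-!
Write `X l` for the truncations `w_{≤l}M`. Two epimorphisms out of `Hom(N, X 0)` are compared: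
composition with `ι 0 : X 0 ⟶ M`, onto `Hom(N, M)`, and composition with `X 0 ⟶ M⁰`, onto the
zeroth homology of `Hom(N, M^*)`. They have the same kernel, which gives the isomorphism.

* `Hom(N, X 0) → Hom(N, M)` is onto because its obstruction lies in `Hom(N, w_{≥1}M) = 0`.
  Since `Hom(N[1], w_{≥2}M) = 0`, the map `Hom(N, X 1) → Hom(N, M)` is injective, so a morphism
  `N ⟶ X 0` is killed in `M` iff it is killed in `X 1`, iff it factors through the (desuspended)
  connecting morphism `d : M^{-1} ⟶ X 0`. The composite of `d` with `X 0 ⟶ M⁰` is the boundary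
  `M^{-1} ⟶ M⁰`.
* As `M ∈ C_{w≥0}`, orthogonality gives `ι (-1) = 0`, so that what is killed in `M⁰` comes from
  `X (-1)` and is killed in `M`. Moreover `X (-2) ⟶ X (-1)` vanishes: as its composite to `M` is
  zero, its shift by one factors through a morphism `X (-2)[1] ⟶ w_{≥0}M`, which is zero.
  Hence `X (-1)[1] ⟶ M¹` is injective on `Hom(N, -)`, and a cocycle `N ⟶ M⁰` lifts to `X 0`.
-/

open CategoryTheory CategoryTheory.Limits CategoryTheory.Pretriangulated

namespace CWH

/-- `X` is a retract of `Y`. -/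
def IsRetract {C : Type*} [Category C] (X Y : C) : Prop :=
  ∃ (i : X ⟶ Y) (r : Y ⟶ X), i ≫ r = 𝟙 X

/-- The Karoubi-closure of a class of objects: all retracts of its objects. -/
def retractClosure {C : Type*} [Category C] (S : Set C) : Set C :=
  {X : C | ∃ Y ∈ S, IsRetract X Y}

variable (C : Type*) [Category C] [HasZeroObject C] [HasShift C ℤ]
  [Preadditive C] [∀ n : ℤ, (shiftFunctor C n).Additive] [Pretriangulated C]

/-- A weight structure on a (pre)triangulated category (homological convention):
a pair of retract-closed classes `LE = C_{w≤0}` and `GE = C_{w≥0}` such that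
`C_{w≤0} ⊆ C_{w≤0}[1]`, `C_{w≥0}[1] ⊆ C_{w≥0}`, `Hom(C_{w≤0}, C_{w≥0}[1]) = 0`,
and every object admits a weight decomposition. -/
structure WeightStructure where
  LE : Set C
  GE : Set C
  retract_LE : ∀ ⦃X Y : C⦄, IsRetract X Y → Y ∈ LE → X ∈ LE
  retract_GE : ∀ ⦃X Y : C⦄, IsRetract X Y → Y ∈ GE → X ∈ GE
  shift_LE : ∀ ⦃X : C⦄, X ∈ LE → X⟦(-1 : ℤ)⟧ ∈ LE
  shift_GE : ∀ ⦃X : C⦄, X ∈ GE → X⟦(1 : ℤ)⟧ ∈ GE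
  orthogonal : ∀ ⦃X Y : C⦄, X ∈ LE → Y ∈ GE → ∀ f : X ⟶ Y⟦(1 : ℤ)⟧, f = 0
  decomp : ∀ M : C, ∃ (X Y : C) (f : X ⟶ M) (g : M ⟶ Y) (h : Y ⟶ X⟦(1 : ℤ)⟧),
    Triangle.mk f g h ∈ (distTriang C) ∧ X ∈ LE ∧ Y⟦(-1 : ℤ)⟧ ∈ GE

variable {C}

namespace WeightStructure

variable (w : WeightStructure C)

/-- `C_{w≤i} = C_{w≤0}[i]`. -/
def le (i : ℤ) : Set C := {X : C | X⟦(-i)⟧ ∈ w.LE}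

/-- `C_{w≥i} = C_{w≥0}[i]`. -/
def ge (i : ℤ) : Set C := {X : C | X⟦(-i)⟧ ∈ w.GE}

/-- `C_{w=i} = C_{w≤i} ∩ C_{w≥i}`. -/
def eqw (i : ℤ) : Set C := w.le i ∩ w.ge i

/-- `w` is bounded if every object lies in some `C_{w≤i}` and in some `C_{w≥i}`. -/
def IsBounded : Prop := ∀ X : C, (∃ i : ℤ, X ∈ w.le i) ∧ (∃ i : ℤ, X ∈ w.ge i)

end WeightStructure

/-- The extension-closure of a class `S` of objects: the smallest class containing
the zero objects and `S` and closed under extensions (distinguished triangles). -/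
inductive ExtClosure (S : Set C) : C → Prop
  | zero (X : C) : IsZero X → ExtClosure S X
  | of (X : C) : X ∈ S → ExtClosure S X
  | ext {A E B : C} (f : A ⟶ E) (g : E ⟶ B) (h : B ⟶ A⟦(1 : ℤ)⟧) :
      Triangle.mk f g h ∈ (distTriang C) → ExtClosure S A → ExtClosure S B → ExtClosure S E

/-- The smallest full Karoubi-closed (strict) triangulated subcategory containing `S`:
closure under zero objects, shifts, cones and retracts. -/
inductive TriangClosure (S : Set C) : C → Prop
  | of (X : C) : X ∈ S → TriangClosure S X
  | zero (X : C) : IsZero X → TriangClosure S X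
  | shift (X : C) (n : ℤ) : TriangClosure S X → TriangClosure S (X⟦n⟧)
  | ext {X Y Z : C} (f : X ⟶ Y) (g : Y ⟶ Z) (h : Z ⟶ X⟦(1 : ℤ)⟧) :
      Triangle.mk f g h ∈ (distTriang C) → TriangClosure S X → TriangClosure S Y →
      TriangClosure S Z
  | retract (X Y : C) : IsRetract X Y → TriangClosure S Y → TriangClosure S X

/-- A (strict) full triangulated subcategory, given by its class of objects:
it contains the zero objects and is closed under shifts and under the
two-out-of-three property for distinguished triangles. -/
structure IsTriangulatedSub (P : Set C) : Prop where
  zero : ∀ X : C, IsZero X → X ∈ P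
  shift : ∀ X ∈ P, ∀ n : ℤ, X⟦n⟧ ∈ P
  ext₂ : ∀ ⦃X Y Z : C⦄ (f : X ⟶ Y) (g : Y ⟶ Z) (h : Z ⟶ X⟦(1 : ℤ)⟧),
    Triangle.mk f g h ∈ (distTriang C) → X ∈ P → Z ∈ P → Y ∈ P
  ext₃ : ∀ ⦃X Y Z : C⦄ (f : X ⟶ Y) (g : Y ⟶ Z) (h : Z ⟶ X⟦(1 : ℤ)⟧),
    Triangle.mk f g h ∈ (distTriang C) → X ∈ P → Y ∈ P → Z ∈ P
  ext₁ : ∀ ⦃X Y Z : C⦄ (f : X ⟶ Y) (g : Y ⟶ Z) (h : Z ⟶ X⟦(1 : ℤ)⟧),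
    Triangle.mk f g h ∈ (distTriang C) → Y ∈ P → Z ∈ P → X ∈ P

/-- A weight structure on the full (triangulated) subcategory of `C` whose objects
are given by the class `P`; retracts are taken inside `P` and the distinguished
triangles of the subcategory are the distinguished triangles of `C` with vertices
in `P`. -/
structure IsWeightStructureOn (P LEs GEs : Set C) : Prop where
  le_sub : LEs ⊆ P
  ge_sub : GEs ⊆ P
  retract_le : ∀ ⦃X Y : C⦄, X ∈ P → IsRetract X Y → Y ∈ LEs → X ∈ LEs
  retract_ge : ∀ ⦃X Y : C⦄, X ∈ P → IsRetract X Y → Y ∈ GEs → X ∈ GEs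
  shift_le : ∀ ⦃X : C⦄, X ∈ LEs → X⟦(-1 : ℤ)⟧ ∈ LEs
  shift_ge : ∀ ⦃X : C⦄, X ∈ GEs → X⟦(1 : ℤ)⟧ ∈ GEs
  orthogonal : ∀ ⦃X Y : C⦄, X ∈ LEs → Y ∈ GEs → ∀ f : X ⟶ Y⟦(1 : ℤ)⟧, f = 0
  decomp : ∀ M ∈ P, ∃ (X Y : C) (f : X ⟶ M) (g : M ⟶ Y) (h : Y ⟶ X⟦(1 : ℤ)⟧),
    Triangle.mk f g h ∈ (distTriang C) ∧ X ∈ LEs ∧ Y⟦(-1 : ℤ)⟧ ∈ GEs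

/-- The class of morphisms of `C` whose cone lies in `P`; the Verdier quotient
`C/P` is the localization of `C` at this class. -/
def coneIn (P : Set C) : MorphismProperty C := fun X Y f =>
  ∃ (Z : C) (g : Y ⟶ Z) (h : Z ⟶ X⟦(1 : ℤ)⟧),
    Triangle.mk f g h ∈ (distTriang C) ∧ Z ∈ P

/-- A weight Postnikov tower for `M`: choices of weight truncations `trunc l = w_{≤l}M`
(with cones `conePt l = w_{≥l+1}M`), of the connecting morphisms between them that are
compatible with `𝟙 M`, and of the distinguished triangles
`w_{≤l}M → w_{≤l+1}M → M^{-l-1}[l+1] → (w_{≤l}M)[1]`; the objects `termAt l = M^{-l}`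
lie in the heart and are the terms of the associated weight complex `t(M)`, whose
boundary morphisms `bd (l+1) l : M^{-l-1} → M^{-l}` are obtained by composing the
connecting morphisms of two consecutive triangles. -/
structure WeightPostnikovTower (w : WeightStructure C) (M : C) where
  trunc : ℤ → C
  trunc_mem : ∀ l : ℤ, trunc l ∈ w.le l
  ι : ∀ l : ℤ, trunc l ⟶ M
  conePt : ℤ → C
  cone_mem : ∀ l : ℤ, conePt l ∈ w.ge (l + 1)
  coneπ : ∀ l : ℤ, M ⟶ conePt l
  coneδ : ∀ l : ℤ, conePt l ⟶ (trunc l)⟦(1 : ℤ)⟧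
  trunc_dist : ∀ l : ℤ, Triangle.mk (ι l) (coneπ l) (coneδ l) ∈ (distTriang C)
  step : ∀ l : ℤ, trunc l ⟶ trunc (l + 1)
  step_ι : ∀ l : ℤ, step l ≫ ι (l + 1) = ι l
  termAt : ℤ → C
  term_mem : ∀ l : ℤ, termAt l ∈ w.LE ∧ termAt l ∈ w.GE
  sπ : ∀ l : ℤ, trunc l ⟶ (termAt l)⟦l⟧
  sδ : ∀ l : ℤ, (termAt (l + 1))⟦(l + 1 : ℤ)⟧ ⟶ (trunc l)⟦(1 : ℤ)⟧
  step_dist : ∀ l : ℤ, Triangle.mk (step l) (sπ (l + 1)) (sδ l) ∈ (distTriang C)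
  bd : ∀ i j : ℤ, termAt i ⟶ termAt j
  bd_shape : ∀ i j : ℤ, j + 1 ≠ i → bd i j = 0
  bd_eq : ∀ l : ℤ,
    (shiftFunctor C (l + 1)).map (bd (l + 1) l) ≫
      (shiftFunctorAdd' C l 1 (l + 1) rfl).hom.app (termAt l) =
    sδ l ≫ (shiftFunctor C (1 : ℤ)).map (sπ l)

/-- The differential of the weight complex associated to a weight Postnikov tower,
in "homological" indexing: the `l`-th term `termAt l` is the `(-l)`-th term `M^{-l}`
of the weight complex. -/
def towerD {w : WeightStructure C} {M : C} (T : WeightPostnikovTower w M) :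
    ∀ l : ℤ, T.termAt (l + 1) ⟶ T.termAt l :=
  fun l => T.bd (l + 1) l

section Complexes

variable {X Y : ℤ → C}

/-- A morphism of ("homologically indexed") complexes. -/
def IsChainMapDown (X Y : ℤ → C) (dX : ∀ l : ℤ, X (l + 1) ⟶ X l)
    (dY : ∀ l : ℤ, Y (l + 1) ⟶ Y l) (f : ∀ l : ℤ, X l ⟶ Y l) : Prop :=
  ∀ l : ℤ, f (l + 1) ≫ dY l = dX l ≫ f l

/-- Two families of morphisms of complexes are chain homotopic. -/
def ChainHomotopicDown (X Y : ℤ → C) (dX : ∀ l : ℤ, X (l + 1) ⟶ X l)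
    (dY : ∀ l : ℤ, Y (l + 1) ⟶ Y l) (f g : ∀ l : ℤ, X l ⟶ Y l) : Prop :=
  ∃ s : ∀ l : ℤ, X l ⟶ Y (l + 1),
    ∀ l : ℤ, f (l + 1) - g (l + 1) = s (l + 1) ≫ dY (l + 1) + dX l ≫ s l

/-- Two complexes are homotopy equivalent (i.e., isomorphic in the homotopy category). -/
def HomotopyEquivDown (X Y : ℤ → C) (dX : ∀ l : ℤ, X (l + 1) ⟶ X l)
    (dY : ∀ l : ℤ, Y (l + 1) ⟶ Y l) : Prop :=
  ∃ (f : ∀ l : ℤ, X l ⟶ Y l) (g : ∀ l : ℤ, Y l ⟶ X l),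
    IsChainMapDown X Y dX dY f ∧ IsChainMapDown Y X dY dX g ∧
    ChainHomotopicDown X X dX dX (fun l => f l ≫ g l) (fun l => 𝟙 (X l)) ∧
    ChainHomotopicDown Y Y dY dY (fun l => g l ≫ f l) (fun l => 𝟙 (Y l))

end Complexes


/-- Orthogonality in shifted form: `Hom(X, Y) = 0` if for some `c` the object `X[c]` is in
`C_{w≤0}` and `Y[c]` is in `C_{w≥1}`, both up to isomorphism. -/
lemma WeightStructure.hom_eq_zero (w : WeightStructure C) {X Y X' Y' : C} (c : ℤ)
    (hX : X' ∈ w.LE) (hY : Y' ∈ w.GE) (e₁ : X' ≅ X⟦c⟧) (e₂ : Y⟦c⟧ ≅ Y'⟦(1 : ℤ)⟧)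
    (f : X ⟶ Y) : f = 0 := by
  have h := w.orthogonal hX hY (e₁.hom ≫ f⟦c⟧' ≫ e₂.hom)
  apply (shiftFunctor C c).map_injective
  rw [Functor.map_zero, ← cancel_epi e₁.hom, ← cancel_mono e₂.hom]
  simpa using h

section Exactness

/- Exactness of `Hom(W, -)` on a distinguished triangle given by its three morphisms. -/

variable {W X Y Z : C} {f : X ⟶ Y} {g : Y ⟶ Z} {h : Z ⟶ X⟦(1 : ℤ)⟧}

lemma exists_comp_mor₁ (hT : Triangle.mk f g h ∈ (distTriang C)) (k : W ⟶ Y) (hk : k ≫ g = 0) :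
    ∃ k' : W ⟶ X, k' ≫ f = k :=
  (Triangle.coyoneda_exact₂ _ hT k hk).imp fun _ e => e.symm

lemma exists_comp_mor₂ (hT : Triangle.mk f g h ∈ (distTriang C)) (k : W ⟶ Z) (hk : k ≫ h = 0) :
    ∃ k' : W ⟶ Y, k' ≫ g = k :=
  (Triangle.coyoneda_exact₃ _ hT k hk).imp fun _ e => e.symm

lemma exists_comp_mor₃ (hT : Triangle.mk f g h ∈ (distTriang C)) (k : W ⟶ X⟦(1 : ℤ)⟧)
    (hk : k ≫ f⟦(1 : ℤ)⟧' = 0) : ∃ k' : W ⟶ Z, k' ≫ h = k :=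
  (Triangle.coyoneda_exact₁ _ hT k hk).imp fun _ e => e.symm

lemma exists_comp_shift_mor₁ (hT : Triangle.mk f g h ∈ (distTriang C)) (k : W ⟶ Y⟦(1 : ℤ)⟧)
    (hk : k ≫ g⟦(1 : ℤ)⟧' = 0) : ∃ k' : W ⟶ X⟦(1 : ℤ)⟧, k' ≫ f⟦(1 : ℤ)⟧' = k := by
  have hT' : Triangle.mk g h (-f⟦(1 : ℤ)⟧') ∈ (distTriang C) := rot_of_distTriang _ hT
  obtain ⟨k', e⟩ := exists_comp_mor₃ hT' k hk
  exact ⟨-k', by simpa using e⟩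

end Exactness

namespace WeightPostnikovTower

variable {w : WeightStructure C} {M : C} (T : WeightPostnikovTower w M)

/-- The morphism `w_{≤l}M ⟶ w_{≤m}M` for `l + 1 = m`; the free index `m` allows one to use
numerals for both truncations. -/
def stepTo {l m : ℤ} (h : l + 1 = m) : T.trunc l ⟶ T.trunc m := by
  subst h
  exact T.step l

/-- The connecting morphism `M^{-m}[m] ⟶ (w_{≤l}M)[1]` for `l + 1 = m`. -/
def connecting {l m : ℤ} (h : l + 1 = m) : (T.termAt m)⟦m⟧ ⟶ (T.trunc l)⟦(1 : ℤ)⟧ := by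
  subst h
  exact T.sδ l

lemma stepTo_ι {l m : ℤ} (h : l + 1 = m) : T.stepTo h ≫ T.ι m = T.ι l := by
  subst h
  exact T.step_ι l

lemma stepTo_dist {l m : ℤ} (h : l + 1 = m) :
    Triangle.mk (T.stepTo h) (T.sπ m) (T.connecting h) ∈ (distTriang C) := by
  subst h
  exact T.step_dist l

lemma map_bd {l m : ℤ} (h : l + 1 = m) :
    (T.bd m l)⟦m⟧' ≫ (shiftFunctorAdd' C l 1 m h).hom.app (T.termAt l) =
      T.connecting h ≫ (T.sπ l)⟦(1 : ℤ)⟧' := by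
  subst h
  exact T.bd_eq l

lemma ι_neg_one_eq_zero (hM : M ∈ w.GE) : T.ι (-1) = 0 :=
  w.hom_eq_zero 1 (T.trunc_mem (-1)) hM (Iso.refl _) (Iso.refl _) _

lemma stepTo_neg_one_eq_zero (hM : M ∈ w.GE) (h : (-2 : ℤ) + 1 = -1) : T.stepTo h = 0 := by
  apply (shiftFunctor C (1 : ℤ)).map_injective
  rw [Functor.map_zero]
  obtain ⟨g, hg⟩ := exists_comp_mor₃ (T.trunc_dist (-1)) ((T.stepTo h)⟦(1 : ℤ)⟧') (by
    rw [T.ι_neg_one_eq_zero hM, Functor.map_zero, comp_zero])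
  have hg0 : g = 0 := w.hom_eq_zero 1 (T.trunc_mem (-2)) (T.cone_mem (-1))
    ((shiftFunctorAdd' C (1 : ℤ) 1 (- -2) (by norm_num)).app _)
    ((shiftFunctorAdd' C (-(-1 + 1) : ℤ) 1 1 (by norm_num)).app _) g
  rw [← hg, hg0, zero_comp]

/-- The morphism `w_{≤0}M ⟶ M⁰` of the tower, with the shift by zero removed. -/
noncomputable def toTermZero : T.trunc 0 ⟶ T.termAt 0 :=
  T.sπ 0 ≫ (shiftFunctorZero C ℤ).hom.app _

lemma toTermZero_inv :
    T.toTermZero ≫ (shiftFunctorZero C ℤ).inv.app (T.termAt 0) = T.sπ 0 := by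
  rw [toTermZero, Category.assoc, Iso.hom_inv_id_app, Category.comp_id]

/-- The connecting morphism `M^{-1} ⟶ w_{≤0}M` of the tower, with the shift by one removed. -/
noncomputable def fromTermOne : T.termAt 1 ⟶ T.trunc 0 :=
  (shiftFunctor C (1 : ℤ)).preimage (T.connecting (zero_add 1))

lemma map_fromTermOne : (T.fromTermOne)⟦(1 : ℤ)⟧' = T.connecting (zero_add 1) :=
  (shiftFunctor C (1 : ℤ)).map_preimage _

lemma fromTermOne_toTermZero : T.fromTermOne ≫ T.toTermZero = T.bd 1 0 := by
  rw [← cancel_mono ((shiftFunctorZero C ℤ).inv.app (T.termAt 0)), Category.assoc,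
    toTermZero_inv]
  apply (shiftFunctor C (1 : ℤ)).map_injective
  rw [Functor.map_comp, Functor.map_comp, map_fromTermOne, ← T.map_bd (zero_add 1),
    shiftFunctorAdd'_zero_add_hom_app]

lemma fromTermOne_ι : T.fromTermOne ≫ T.ι 0 = 0 := by
  have h : T.fromTermOne ≫ T.stepTo (zero_add 1) = 0 := by
    apply (shiftFunctor C (1 : ℤ)).map_injective
    rw [Functor.map_comp, map_fromTermOne, Functor.map_zero]
    exact comp_distTriang_mor_zero₃₁ _ (T.stepTo_dist (zero_add 1))
  rw [← T.stepTo_ι (zero_add 1), ← Category.assoc, h, zero_comp]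

/-- A morphism to `w_{≤0}M` killed in `M⁰` comes from `w_{≤-1}M`, hence is killed in `M`. -/
lemma comp_ι_eq_zero_of_comp_toTermZero (hM : M ∈ w.GE) {N : C} (f : N ⟶ T.trunc 0)
    (hf : f ≫ T.toTermZero = 0) : f ≫ T.ι 0 = 0 := by
  obtain ⟨h, rfl⟩ := exists_comp_mor₁ (T.stepTo_dist (neg_add_cancel 1)) f (by
    rw [← toTermZero_inv, ← Category.assoc, hf, zero_comp])
  rw [Category.assoc, stepTo_ι, T.ι_neg_one_eq_zero hM, comp_zero]

lemma exists_of_comp_ι {N : C} (hN : N ∈ w.LE) (f : N ⟶ T.trunc 0) (hf : f ≫ T.ι 0 = 0) :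
    ∃ g : N ⟶ T.termAt 1, g ≫ T.fromTermOne = f := by
  -- `f` is already killed in `w_{≤1}M`, since `Hom(N[1], w_{≥2}M) = 0`.
  obtain ⟨k, hk⟩ := exists_comp_mor₃ (T.trunc_dist 1)
    ((f ≫ T.stepTo (zero_add 1))⟦(1 : ℤ)⟧') (by
      rw [← Functor.map_comp, Category.assoc, stepTo_ι, hf, Functor.map_zero])
  have hk0 : k = 0 := w.hom_eq_zero (-1) hN (T.cone_mem 1)
    ((shiftFunctorCompIsoId C (1 : ℤ) (-1) (by norm_num)).symm.app N)
    ((shiftFunctorAdd' C (-(1 + 1) : ℤ) 1 (-1) (by norm_num)).app _) k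
  rw [hk0, zero_comp, Functor.map_comp] at hk
  obtain ⟨g, hg⟩ := exists_comp_mor₃ (T.stepTo_dist (zero_add 1)) (f⟦(1 : ℤ)⟧') hk.symm
  refine ⟨(shiftFunctor C (1 : ℤ)).preimage g, (shiftFunctor C (1 : ℤ)).map_injective ?_⟩
  rw [Functor.map_comp, map_fromTermOne, Functor.map_preimage, hg]

lemma exists_lift_ι {N : C} (hN : N ∈ w.LE) (f : N ⟶ M) :
    ∃ g : N ⟶ T.trunc 0, g ≫ T.ι 0 = f :=
  exists_comp_mor₁ (T.trunc_dist 0) f (w.hom_eq_zero 0 hN (T.cone_mem 0)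
    ((shiftFunctorZero C ℤ).symm.app N)
    ((shiftFunctorAdd' C (-(0 + 1) : ℤ) 1 0 (by norm_num)).app _) _)

/-- The connecting morphism `M⁰ ⟶ (w_{≤-1}M)[1]` followed by `(w_{≤-1}M)[1] ⟶ M¹[-1][1]` is the
boundary `M⁰ ⟶ M¹`, up to the canonical identification of shifts. -/
lemma bd_zero_neg_one : T.bd 0 (-1) ≫ (shiftFunctorZero C ℤ).inv.app (T.termAt (-1)) ≫
      (shiftFunctorAdd' C (-1 : ℤ) 1 0 (neg_add_cancel 1)).hom.app (T.termAt (-1)) =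
    (shiftFunctorZero C ℤ).inv.app (T.termAt 0) ≫ T.connecting (neg_add_cancel 1) ≫
      (T.sπ (-1))⟦(1 : ℤ)⟧' := by
  rw [← T.map_bd (neg_add_cancel 1)]
  exact (shiftFunctorZero C ℤ).inv.naturality_assoc (T.bd 0 (-1)) _

lemma toTermZero_bd : T.toTermZero ≫ T.bd 0 (-1) = 0 := by
  have h : T.sπ 0 ≫ T.connecting (neg_add_cancel 1) = 0 :=
    comp_distTriang_mor_zero₂₃ _ (T.stepTo_dist (neg_add_cancel 1))
  rw [← cancel_mono ((shiftFunctorZero C ℤ).inv.app (T.termAt (-1)) ≫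
    (shiftFunctorAdd' C (-1 : ℤ) 1 0 (neg_add_cancel 1)).hom.app (T.termAt (-1))),
    Category.assoc, T.bd_zero_neg_one, ← Category.assoc, toTermZero_inv, ← Category.assoc, h,
    zero_comp, zero_comp]

lemma exists_lift_toTermZero (hM : M ∈ w.GE) {N : C} (g : N ⟶ T.termAt 0)
    (hg : g ≫ T.bd 0 (-1) = 0) : ∃ f : N ⟶ T.trunc 0, f ≫ T.toTermZero = g := by
  -- `step (-2) = 0`, so a morphism to `(w_{≤-1}M)[1]` vanishes as soon as it does in `M¹`.
  have h2 : (g ≫ (shiftFunctorZero C ℤ).inv.app (T.termAt 0)) ≫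
      T.connecting (neg_add_cancel 1) = 0 := by
    have e : (-2 : ℤ) + 1 = -1 := by norm_num
    obtain ⟨k, hk⟩ := exists_comp_shift_mor₁ (T.stepTo_dist e)
      ((g ≫ (shiftFunctorZero C ℤ).inv.app (T.termAt 0)) ≫ T.connecting (neg_add_cancel 1)) (by
        rw [Category.assoc, Category.assoc, ← T.bd_zero_neg_one, ← Category.assoc, hg,
          zero_comp])
    rw [← hk, T.stepTo_neg_one_eq_zero hM, Functor.map_zero, comp_zero]
  obtain ⟨f, hf⟩ := exists_comp_mor₂ (T.stepTo_dist (neg_add_cancel 1)) _ h2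
  refine ⟨f, ?_⟩
  rw [← cancel_mono ((shiftFunctorZero C ℤ).inv.app (T.termAt 0)), Category.assoc,
    toTermZero_inv, hf]

/-- The two maps out of `Hom(N, w_{≤0}M)`, to `Hom(N, M)` and to the zeroth homology of
`Hom(N, M^*)`, have the same kernel. -/
lemma comp_ι_eq_zero_iff (hM : M ∈ w.GE) {N : C} (hN : N ∈ w.LE) (f : N ⟶ T.trunc 0) :
    f ≫ T.ι 0 = 0 ↔ ∃ g : N ⟶ T.termAt 1, g ≫ T.bd 1 0 = f ≫ T.toTermZero := by
  constructor
  · intro hf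
    obtain ⟨g, rfl⟩ := T.exists_of_comp_ι hN f hf
    exact ⟨g, by rw [Category.assoc, fromTermOne_toTermZero]⟩
  · rintro ⟨g, hg⟩
    have h := T.comp_ι_eq_zero_of_comp_toTermZero hM (f - g ≫ T.fromTermOne) (by
      rw [Preadditive.sub_comp, Category.assoc, fromTermOne_toTermZero, hg, sub_self])
    rwa [Preadditive.sub_comp, Category.assoc, fromTermOne_ι, comp_zero, sub_zero] at h

end WeightPostnikovTower

/-- for a bounded weight structure, `M ∈ C_{w≥0}`, `N ∈ C_{w=0}` and a
weight complex `t(M)` with terms `M^i = termAt (-i)`, the group `Hom(N, M)` is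
isomorphic to the zeroth homology of the complex `Hom(N, M^*)`, i.e., to
`ker(Hom(N,M^0) → Hom(N,M^1)) / im(Hom(N,M^{-1}) → Hom(N,M^0))` (the image is
intersected with the kernel, which it lies in). -/
theorem statement17 (w : WeightStructure C) (hw : w.IsBounded) (M N : C)
    (hM : M ∈ w.GE) (hN : N ∈ w.LE ∩ w.GE)
    (T : WeightPostnikovTower w M) :
    Nonempty
      ((N ⟶ M) ≃+
        (AddMonoidHom.ker (Preadditive.rightComp N (T.bd 0 (-1))) ⧸
          (AddMonoidHom.range (Preadditive.rightComp N (T.bd 1 0))).addSubgroupOf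
            (AddMonoidHom.ker (Preadditive.rightComp N (T.bd 0 (-1)))))) := by
  -- The map `Hom(N, w_{≤0}M) → ker(Hom(N, M⁰) → Hom(N, M¹))`.
  let κ : (N ⟶ T.trunc 0) →+ AddMonoidHom.ker (Preadditive.rightComp N (T.bd 0 (-1))) :=
    (Preadditive.rightComp N T.toTermZero).codRestrict _ (fun f => by
      change (f ≫ T.toTermZero) ≫ T.bd 0 (-1) = 0
      rw [Category.assoc, T.toTermZero_bd, comp_zero])
  let φ : (N ⟶ T.trunc 0) →+ (N ⟶ M) := Preadditive.rightComp N (T.ι 0)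
  let ψ := (QuotientAddGroup.mk'
    ((AddMonoidHom.range (Preadditive.rightComp N (T.bd 1 0))).addSubgroupOf
      (AddMonoidHom.ker (Preadditive.rightComp N (T.bd 0 (-1)))))).comp κ
  have hφ : Function.Surjective φ := fun f => T.exists_lift_ι hN.1 f
  have hκ : Function.Surjective κ := by
    rintro ⟨g, hg⟩
    obtain ⟨f, hf⟩ := T.exists_lift_toTermZero hM g hg
    exact ⟨f, Subtype.ext hf⟩
  have hψ : Function.Surjective ψ := (QuotientAddGroup.mk'_surjective _).comp hκ
  have hker : φ.ker = ψ.ker := by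
    ext f
    refine (T.comp_ι_eq_zero_iff hM hN.1 f).trans ?_
    exact (QuotientAddGroup.eq_zero_iff
      (N := (AddMonoidHom.range (Preadditive.rightComp N (T.bd 1 0))).addSubgroupOf
        (AddMonoidHom.ker (Preadditive.rightComp N (T.bd 0 (-1))))) (κ f)).symm
  exact ⟨(QuotientAddGroup.quotientKerEquivOfSurjective φ hφ).symm.trans
    ((QuotientAddGroup.quotientAddEquivOfEq hker).trans
      (QuotientAddGroup.quotientKerEquivOfSurjective ψ hψ))⟩

end CWH
end

section
/- Let w be a bounded weight structure on a triangulated category C, let D be a full triangulated subcategory of C such that w restricts to D, and let l : C → C/D denote the Verdier quotient functor. Let M ∈ C_{w≥0}, N ∈ C_{w=0}, and let f : N → M be a morphism with l(f) = 0 in C/D. Then f factors through some object of D lying in C_{w=0}. -/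
/-!
If `f : N ⟶ M` factors through some object of `D`, weight decompositions in `D` cut that object
down to the heart: as `N` has weight `≤ 0`, the part of weight `≥ 1` can be discarded, and then,
as `M` has weight `≥ 0`, so can the part of weight `≤ -1`. What remains has weight `≥ 0` by
construction and weight `≤ 0` because `C_{w≤0}` is the left orthogonal of `C_{w≥1}`
(`WeightStructure.mem_LE_of_orthogonal`).

It remains to see that a morphism killed by the Verdier quotient factors through an object of `D`
(`factorsThrough_of_map_eq_zero`). The category `C` is only assumed pretriangulated, so the
morphisms with cone in `D` need not be stable under composition. Their multiplicative closure
nevertheless has a left calculus of fractions (`hasLeftCalculusOfFractions`) and defines the same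
localization. Hence `f` is annihilated by a finite composition of morphisms with cone in `D`, and
these can be removed one at a time (`FactorsThrough.of_comp`).
-/

open CategoryTheory CategoryTheory.Limits CategoryTheory.Pretriangulated

namespace CWH

variable (C : Type*) [Category C] [HasZeroObject C] [HasShift C ℤ]
  [Preadditive C] [∀ n : ℤ, (shiftFunctor C n).Additive] [Pretriangulated C]

variable {C}

/-! ### Morphisms killed by the Verdier quotient -/

/-- The class of morphisms of `C` that factor through an object of `P`. -/
def FactorsThrough (P : Set C) {X Y : C} (f : X ⟶ Y) : Prop :=
  ∃ (Q : C) (u : X ⟶ Q) (v : Q ⟶ Y), Q ∈ P ∧ u ≫ v = f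

lemma FactorsThrough.add {P : Set C} (hP : IsTriangulatedSub P) {X Y : C} {f g : X ⟶ Y}
    (hf : FactorsThrough P f) (hg : FactorsThrough P g) : FactorsThrough P (f + g) := by
  obtain ⟨Q₁, u₁, v₁, h₁, rfl⟩ := hf
  obtain ⟨Q₂, u₂, v₂, h₂, rfl⟩ := hg
  refine ⟨Q₁ ⊞ Q₂, biprod.lift u₁ u₂, biprod.desc v₁ v₂, ?_, by simp⟩
  exact hP.ext₂ _ _ _ (binaryBiproductTriangle_distinguished Q₁ Q₂) h₁ h₂

lemma factorsThrough_of_comp_eq_zero {P : Set C} (hP : IsTriangulatedSub P) {X Y Y' : C}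
    {f : X ⟶ Y} {t : Y ⟶ Y'} (ht : coneIn P t) (h : f ≫ t = 0) : FactorsThrough P f := by
  obtain ⟨Z, g, δ, mem, hZ⟩ := ht
  obtain ⟨k, hk⟩ := Triangle.coyoneda_exact₂ _ (inv_rot_of_distTriang _ mem) f h
  exact ⟨_, k, _, hP.shift _ hZ (-1), hk.symm⟩

/-- The ideal of morphisms factoring through `P` is saturated with respect to postcomposition
with morphisms whose cone is in `P`. If `f ≫ t = a ≫ b` factors through `Q`, then the fibre `Q'`
of `Q ⟶ cone t` lies in `P`, and `f` differs from a morphism factoring through `Q'` by a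
morphism killed by `t`. -/
lemma FactorsThrough.of_comp {P : Set C} (hP : IsTriangulatedSub P) {X Y Y' : C}
    {f : X ⟶ Y} {t : Y ⟶ Y'} (ht : coneIn P t) (h : FactorsThrough P (f ≫ t)) :
    FactorsThrough P f := by
  obtain ⟨Q, a, b, hQ, hab⟩ := h
  have ht' := ht
  obtain ⟨Z, g, δ, mem, hZ⟩ := ht
  obtain ⟨Q', c, d, mem'⟩ := distinguished_cocone_triangle₁ (b ≫ g)
  have hQ' : Q' ∈ P := hP.ext₁ _ _ _ mem' hQ hZ
  obtain ⟨e, he⟩ : ∃ e : Q' ⟶ Y, c ≫ b = e ≫ t := by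
    obtain ⟨e, he, -⟩ := complete_distinguished_triangle_morphism₁ _ _ mem' mem b (𝟙 Z)
      (Category.comp_id (b ≫ g))
    exact ⟨e, he⟩
  have htg : t ≫ g = 0 := comp_distTriang_mor_zero₁₂ _ mem
  obtain ⟨a', ha'⟩ : ∃ a' : X ⟶ Q', a = a' ≫ c := Triangle.coyoneda_exact₂ _ mem' a (by
    change a ≫ b ≫ g = 0
    rw [← Category.assoc, hab, Category.assoc, htg, comp_zero])
  have hd : FactorsThrough P (f - a' ≫ e) := factorsThrough_of_comp_eq_zero hP ht' (by
    rw [Preadditive.sub_comp, Category.assoc, ← he, ← Category.assoc, ← ha', hab, sub_self])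
  have := FactorsThrough.add hP hd ⟨Q', a', e, hQ', rfl⟩
  simpa using this

/-- The Ore condition for a single morphism with cone in `P`. -/
lemma coneIn_ore {P : Set C} {X X' Y : C} {s : X' ⟶ X} (hs : coneIn P s) (f : X' ⟶ Y) :
    ∃ (Y' : C) (f' : X ⟶ Y') (s' : Y ⟶ Y'), coneIn P s' ∧ f ≫ s' = s ≫ f' := by
  obtain ⟨Z, g, δ, mem, hZ⟩ := hs
  obtain ⟨Y', s', g', mem'⟩ := distinguished_cocone_triangle₂ (δ ≫ f⟦(1 : ℤ)⟧')
  obtain ⟨b, hb, -⟩ := complete_distinguished_triangle_morphism₂ _ _ mem mem' f (𝟙 Z)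
    (Category.id_comp (δ ≫ f⟦(1 : ℤ)⟧')).symm
  exact ⟨Y', b, s', ⟨_, _, _, mem', hZ⟩, hb.symm⟩

/-- A morphism annihilated by precomposition with a morphism with cone in `P` is annihilated
by postcomposition with such a morphism. -/
lemma coneIn_cancel {P : Set C} (hP : IsTriangulatedSub P) {X X' Y : C} {s : X' ⟶ X}
    (hs : coneIn P s) (f : X ⟶ Y) (h : s ≫ f = 0) :
    ∃ (Y' : C) (t : Y ⟶ Y'), coneIn P t ∧ f ≫ t = 0 := by
  obtain ⟨Z, g, δ, mem, hZ⟩ := hs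
  obtain ⟨q, hq⟩ : ∃ q : Z ⟶ Y, f = g ≫ q := Triangle.yoneda_exact₂ _ mem f h
  obtain ⟨Y', r, t, mem'⟩ := distinguished_cocone_triangle q
  refine ⟨Y', r, ⟨_, _, _, rot_of_distTriang _ mem', hP.shift _ hZ 1⟩, ?_⟩
  have hqr : q ≫ r = 0 := comp_distTriang_mor_zero₁₂ _ mem'
  rw [hq, Category.assoc, hqr, comp_zero]

/-- Without the octahedral axiom, `coneIn P` need not be stable under composition, but its
multiplicative closure always has a left calculus of fractions. -/
lemma hasLeftCalculusOfFractions {P : Set C} (hP : IsTriangulatedSub P) :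
    (coneIn P).multiplicativeClosure.HasLeftCalculusOfFractions where
  exists_leftFraction X Y φ := by
    obtain ⟨s, hs, f⟩ := φ
    suffices ∃ (Y' : C) (f' : X ⟶ Y') (s' : Y ⟶ Y'),
        (coneIn P).multiplicativeClosure s' ∧ f ≫ s' = s ≫ f' by
      obtain ⟨Y', f', s', h, h'⟩ := this
      exact ⟨⟨f', s', h⟩, h'⟩
    induction hs with
    | of s hs =>
      obtain ⟨Y', f', s', h, h'⟩ := coneIn_ore hs f
      exact ⟨Y', f', s', .of _ h, h'⟩
    | id => exact ⟨Y, f, 𝟙 Y, .id _, by simp⟩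
    | comp_of s₁ s₂ _ hs₂ ih =>
      obtain ⟨Y₁, f₁, t₁, h₁, h₁'⟩ := ih f
      obtain ⟨Y₂, f₂, t₂, h₂, h₂'⟩ := coneIn_ore hs₂ f₁
      exact ⟨Y₂, f₂, t₁ ≫ t₂, .comp_of _ _ h₁ h₂, by
        rw [← Category.assoc, h₁', Category.assoc, h₂', Category.assoc]⟩
  ext X' X Y f₁ f₂ s hs h := by
    suffices ∀ f : X ⟶ Y, s ≫ f = 0 →
        ∃ (Y' : C) (t : Y ⟶ Y'), (coneIn P).multiplicativeClosure t ∧ f ≫ t = 0 by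
      obtain ⟨Y', t, ht, hft⟩ := this (f₁ - f₂) (by rw [Preadditive.comp_sub, h, sub_self])
      exact ⟨Y', t, ht, by rwa [Preadditive.sub_comp, sub_eq_zero] at hft⟩
    clear h f₁ f₂
    induction hs with
    | of s hs =>
      intro f h
      obtain ⟨Y', t, ht, h'⟩ := coneIn_cancel hP hs f h
      exact ⟨Y', t, .of _ ht, h'⟩
    | id => exact fun f h => ⟨Y, 𝟙 Y, .id _, by simpa using h⟩
    | comp_of s₁ s₂ _ hs₂ ih =>
      intro f h
      obtain ⟨Y₁, t₁, h₁, h₁'⟩ := ih (s₂ ≫ f) (by rw [← Category.assoc, h])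
      obtain ⟨Y₂, t₂, h₂, h₂'⟩ := coneIn_cancel hP hs₂ (f ≫ t₁)
        (by rw [← Category.assoc, h₁'])
      exact ⟨Y₂, t₁ ≫ t₂, .comp_of _ _ h₁ h₂, by rw [← Category.assoc, h₂']⟩

lemma isLocalization_multiplicativeClosure {A B : Type*} [Category A] [Category B]
    (L : A ⥤ B) (W : MorphismProperty A) [L.IsLocalization W] :
    L.IsLocalization W.multiplicativeClosure := by
  have : (𝟭 B).IsLocalization (⊥ : MorphismProperty B) := Functor.IsLocalization.for_id _ bot_le
  have : (L ⋙ 𝟭 B).IsLocalization W.multiplicativeClosure := by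
    refine Functor.IsLocalization.comp L (𝟭 B) W ⊥ _ ?_ W.le_multiplicativeClosure bot_le
    have h : W.multiplicativeClosure ≤ (MorphismProperty.isomorphisms B).inverseImage L :=
      (W.multiplicativeClosure_le_iff _).2 fun _ _ f hf => Localization.inverts L W f hf
    exact fun _ _ f hf => h f hf
  exact Functor.IsLocalization.of_iso _ L.rightUnitor

lemma factorsThrough_of_map_eq_zero {E : Type*} [Category E] [HasZeroMorphisms E]
    {P : Set C} (hP : IsTriangulatedSub P) (L : C ⥤ E) [L.PreservesZeroMorphisms]
    [L.IsLocalization (coneIn P)] {X Y : C} (f : X ⟶ Y) (hf : L.map f = 0) :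
    FactorsThrough P f := by
  have := hasLeftCalculusOfFractions hP
  have := isLocalization_multiplicativeClosure L (coneIn P)
  rw [← L.map_zero, MorphismProperty.map_eq_iff_postcomp L
    (coneIn P).multiplicativeClosure] at hf
  obtain ⟨Z, s, hs, h⟩ := hf
  have h' : FactorsThrough P (f ≫ s) :=
    ⟨_, 0, 0, hP.zero _ (isZero_zero C), by simp [h]⟩
  clear h
  induction hs with
  | of s hs => exact h'.of_comp hP hs
  | id => simpa using h'
  | comp_of s₁ s₂ _ hs₂ ih =>
    rw [← Category.assoc] at h'
    exact ih f (h'.of_comp hP hs₂)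

/-! ### Orthogonality in a weight structure -/

lemma WeightStructure.eq_zero_of_shift_neg (w : WeightStructure C) {X Y : C} (hX : X ∈ w.LE)
    (hY : Y⟦(-1 : ℤ)⟧ ∈ w.GE) (f : X ⟶ Y) : f = 0 := by
  let e : (Y⟦(-1 : ℤ)⟧)⟦(1 : ℤ)⟧ ≅ Y := (shiftEquiv C (1 : ℤ)).counitIso.app Y
  rw [← cancel_mono e.inv, zero_comp]
  exact w.orthogonal hX hY _

/-- `C_{w≤0}` is the whole left orthogonal of `C_{w≥1}`: an object of this orthogonal is a
retract of the first term of its weight decomposition. -/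
lemma WeightStructure.mem_LE_of_orthogonal (w : WeightStructure C) {X : C}
    (h : ∀ Y ∈ w.GE, ∀ f : X ⟶ Y⟦(1 : ℤ)⟧, f = 0) : X ∈ w.LE := by
  obtain ⟨A, B, a, b, c, mem, hA, hB⟩ := w.decomp X
  let e : (B⟦(-1 : ℤ)⟧)⟦(1 : ℤ)⟧ ≅ B := (shiftEquiv C (1 : ℤ)).counitIso.app B
  have hb : b = 0 := by
    rw [← cancel_mono e.inv, zero_comp]
    exact h _ hB _
  obtain ⟨r, hr⟩ := Triangle.coyoneda_exact₂ _ mem (𝟙 X)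
    ((Category.id_comp b).trans hb)
  exact w.retract_LE ⟨r, a, hr.symm⟩ hA

/-- let `w` be bounded and restrict to the full triangulated subcategory
`D` (with class of objects `P`); let `L : C ⥤ E` realize the Verdier quotient `C/D`.
If `M ∈ C_{w≥0}`, `N ∈ C_{w=0}` and `f : N ⟶ M` vanishes in `C/D`, then `f` factors
through an object of `D` lying in `C_{w=0}`. -/
theorem statement18 {E : Type*} [Category E] [HasZeroObject E] [HasShift E ℤ]
    [Preadditive E] [∀ n : ℤ, (shiftFunctor E n).Additive] [Pretriangulated E]
    (w : WeightStructure C) (hw : w.IsBounded)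
    (P : Set C) (hP : IsTriangulatedSub P)
    (hres : IsWeightStructureOn P (P ∩ w.LE) (P ∩ w.GE))
    (L : C ⥤ E) [L.CommShift ℤ] [L.IsTriangulated] [L.IsLocalization (coneIn P)]
    (M N : C) (hM : M ∈ w.GE) (hN : N ∈ w.LE ∩ w.GE)
    (f : N ⟶ M) (hf : L.map f = 0) :
    ∃ (Q : C) (u : N ⟶ Q) (v : Q ⟶ M),
      Q ∈ P ∧ Q ∈ w.LE ∧ Q ∈ w.GE ∧ u ≫ v = f := by
  obtain ⟨R, p, q, hR, rfl⟩ := factorsThrough_of_map_eq_zero hP L f hf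
  -- Replace `R` by an object `X` of `D_{w≤0}`: as `N` has weight `≤ 0`, it does not see `R_{w≥1}`.
  obtain ⟨X, Y, i, j, k, mem, hX, hY⟩ := hres.decomp R hR
  obtain ⟨p', hp⟩ : ∃ p' : N ⟶ X, p = p' ≫ i := Triangle.coyoneda_exact₂ _ mem p
    (w.eq_zero_of_shift_neg hN.1 hY.2 _)
  -- Decompose `X⟦1⟧`, i.e. split off from `X` its part `A⟦-1⟧` of weight `≤ -1`.
  obtain ⟨A, B, a, b, c, mem', hA, hB⟩ := hres.decomp _ (hP.shift X hX.1 1)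
  obtain ⟨m, hm⟩ : ∃ m : B ⟶ M⟦(1 : ℤ)⟧, (i ≫ q)⟦(1 : ℤ)⟧' = b ≫ m :=
    Triangle.yoneda_exact₂ _ mem' _ (w.orthogonal hA.2 hM _)
  let e : (B⟦(-1 : ℤ)⟧)⟦(1 : ℤ)⟧ ≅ B := (shiftEquiv C (1 : ℤ)).counitIso.app B
  obtain ⟨b', hb'⟩ := (shiftFunctor C (1 : ℤ)).map_surjective (b ≫ e.inv)
  obtain ⟨m', hm'⟩ := (shiftFunctor C (1 : ℤ)).map_surjective (e.hom ≫ m)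
  refine ⟨B⟦(-1 : ℤ)⟧, p' ≫ b', m', hB.1, ?_, hB.2, ?_⟩
  -- `B⟦-1⟧` is an extension of `A` by `X`, both of weight `≤ 0`.
  · refine w.mem_LE_of_orthogonal fun T hT g => ?_
    apply (shiftFunctor C (1 : ℤ)).map_injective
    rw [Functor.map_zero, ← cancel_epi e.inv, comp_zero]
    obtain ⟨n, hn⟩ : ∃ n : A⟦(1 : ℤ)⟧ ⟶ (T⟦(1 : ℤ)⟧)⟦(1 : ℤ)⟧,
        e.inv ≫ g⟦(1 : ℤ)⟧' = c ≫ n := Triangle.yoneda_exact₃ _ mem' _ (by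
      change b ≫ e.inv ≫ g⟦(1 : ℤ)⟧' = 0
      rw [← Category.assoc, ← hb', ← Functor.map_comp, w.orthogonal hX.2 hT (b' ≫ g),
        Functor.map_zero])
    obtain ⟨n', rfl⟩ := (shiftFunctor C (1 : ℤ)).map_surjective n
    rw [hn, w.orthogonal hA.2 hT n', Functor.map_zero, comp_zero]
  · have : b' ≫ m' = i ≫ q := by
      apply (shiftFunctor C (1 : ℤ)).map_injective
      rw [Functor.map_comp, hb', hm', hm]
      simp
    rw [Category.assoc, this, hp, Category.assoc]

end CWH
end

section
/- Let B be an additive category and let K^b(B) be the bounded homotopy category of cochain complexes over B. Define K^b(B)_{w≤0} as the class of complexes that are homotopy equivalent to complexes concentrated in (cohomological) degrees ≥ 0, and K^b(B)_{w≥0} as the class of complexes homotopy equivalent to complexes concentrated in degrees ≤ 0. Then (K^b(B)_{w≤0}, K^b(B)_{w≥0}) is a bounded weight structure on K^b(B) (the stupid weight structure), and its heart is the Karoubi-closure of B in K^b(B), i.e., the full subcategory whose objects are the retracts in K^b(B) of objects of B viewed as complexes concentrated in degree 0. -/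
/-!
The homotopy category is filtered by the classes `ConcIn a b` of complexes homotopy equivalent to
one concentrated in degrees `[a, b]`. A complex in degrees `≥ n` has no nonzero map to one in
degrees `< n` (`ConcIn.hom_eq_zero`), which gives orthogonality, and the degreewise split stupid
filtration (`exists_stupid_triangle`) gives weight decompositions. Boundedness is clear.

The substantial point is closure under retracts, as idempotents of `B` need not split. Let `X` be
bounded and a retract of a complex in degrees `≥ 0`, and let `A ⟶ X ⟶ Z` be its decomposition into
the parts in degrees `≥ 0` and `< 0`. Orthogonality makes `X ⟶ Z` zero, so `A ≅ X ⊞ Z⟦-1⟧`. Now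
`Z⟦-1⟧` is a retract of `A` reaching one degree less far below zero than `X`, so by induction it is
equivalent to a complex in degrees `≥ 0`, and hence so is `X`, the fibre of `A ⟶ Z⟦-1⟧`
(`ConcIn.retract_nonneg`; `ConcIn.retract_nonpos` is the other half).

For the heart: if `X` lies in both classes, the map to `X` from its part in degrees `≥ 1` vanishes,
so `X` is a retract of its part in degree `0`. The converse is closure under retracts.
-/


open CategoryTheory CategoryTheory.Limits CategoryTheory.Pretriangulated

namespace CWH

variable (C : Type*) [Category C] [HasZeroObject C] [HasShift C ℤ]
  [Preadditive C] [∀ n : ℤ, (shiftFunctor C n).Additive] [Pretriangulated C]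

variable {C}

section StupidWeightStructure

variable {B : Type*} [Category B] [Preadditive B] [HasZeroObject B] [HasBinaryBiproducts B]

/-- An object of the homotopy category `K(B)` which is a bounded complex; these are the
objects of the bounded homotopy category `K^b(B)`, viewed as a full triangulated
subcategory of `K(B)`. -/
def boundedObj (X : HomotopyCategory B (ComplexShape.up ℤ)) : Prop :=
  ∃ a b : ℤ, ∀ i : ℤ, (i < a ∨ b < i) → IsZero (X.as.X i)

/-- `K^b(B)_{w≤0}`: bounded complexes homotopy equivalent to (bounded) complexes
concentrated in degrees `≥ 0`. -/
def stupidLE (B : Type*) [Category B] [Preadditive B] [HasZeroObject B]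
    [HasBinaryBiproducts B] : Set (HomotopyCategory B (ComplexShape.up ℤ)) :=
  {X | boundedObj X ∧ ∃ Y : CochainComplex B ℤ,
    (∃ a b : ℤ, ∀ i : ℤ, (i < a ∨ b < i) → IsZero (Y.X i)) ∧
    (∀ i : ℤ, i < 0 → IsZero (Y.X i)) ∧
    Nonempty (X ≅ (HomotopyCategory.quotient B (ComplexShape.up ℤ)).obj Y)}

/-- `K^b(B)_{w≥0}`: bounded complexes homotopy equivalent to (bounded) complexes
concentrated in degrees `≤ 0`. -/
def stupidGE (B : Type*) [Category B] [Preadditive B] [HasZeroObject B]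
    [HasBinaryBiproducts B] : Set (HomotopyCategory B (ComplexShape.up ℤ)) :=
  {X | boundedObj X ∧ ∃ Y : CochainComplex B ℤ,
    (∃ a b : ℤ, ∀ i : ℤ, (i < a ∨ b < i) → IsZero (Y.X i)) ∧
    (∀ i : ℤ, 0 < i → IsZero (Y.X i)) ∧
    Nonempty (X ≅ (HomotopyCategory.quotient B (ComplexShape.up ℤ)).obj Y)}

set_option linter.unusedSectionVars false

/-! ### Split triangles -/

/-- A distinguished triangle with zero connecting morphism splits, so its outer vertices can be
exchanged. -/
lemma exists_swapped_split_triangle {X Y Z : C} {f : X ⟶ Y} {g : Y ⟶ Z} {h : Z ⟶ X⟦(1 : ℤ)⟧}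
    (hT : Triangle.mk f g h ∈ distTriang C) (h0 : h = 0) :
    ∃ (s : Z ⟶ Y) (r : Y ⟶ X),
      Triangle.mk s r 0 ∈ distTriang C ∧ f ≫ r = 𝟙 X ∧ s ≫ g = 𝟙 Z := by
  obtain ⟨(e : Y ≅ X ⊞ Z), (h₁ : f ≫ e.hom = biprod.inl), (h₂ : g = e.hom ≫ biprod.snd)⟩ :=
    exists_iso_binaryBiproduct_of_distTriang _ hT h0
  refine ⟨biprod.inr ≫ e.inv, e.hom ≫ biprod.fst, ?_, ?_, ?_⟩
  · refine isomorphic_distinguished _ (binaryBiproductTriangle_distinguished Z X) _ ?_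
    refine Triangle.isoMk _ _ (Iso.refl _) (e ≪≫ biprod.braiding _ _) (Iso.refl _) ?_ ?_ ?_
    · change (biprod.inr ≫ e.inv) ≫ e.hom ≫ (biprod.braiding X Z).hom = 𝟙 Z ≫ biprod.inl
      ext <;> simp
    · change (e.hom ≫ biprod.fst) ≫ 𝟙 X = (e.hom ≫ (biprod.braiding X Z).hom) ≫ biprod.snd
      simp
    · exact zero_comp.trans comp_zero.symm
  · rw [reassoc_of% h₁]; simp
  · rw [h₂]; simp

lemma exists_split_triangle_of_mor₂_eq_zero {A X Z : C} {f : A ⟶ X} {g : X ⟶ Z}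
    {h : Z ⟶ A⟦(1 : ℤ)⟧} (hT : Triangle.mk f g h ∈ distTriang C) (h0 : g = 0) :
    ∃ (s : X ⟶ A) (t : A ⟶ Z⟦(-1 : ℤ)⟧),
      Triangle.mk s t 0 ∈ distTriang C ∧ IsRetract (Z⟦(-1 : ℤ)⟧) A := by
  subst h0
  obtain ⟨s, t, hst, ht, -⟩ := exists_swapped_split_triangle (X := Z⟦(-1 : ℤ)⟧) (Y := A) (Z := X)
    (inv_rot_of_distTriang _ hT) zero_comp
  exact ⟨s, t, hst, _, t, ht⟩

lemma exists_split_triangle_of_mor₁_eq_zero {A X Z : C} {f : A ⟶ X} {g : X ⟶ Z}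
    {h : Z ⟶ A⟦(1 : ℤ)⟧} (hT : Triangle.mk f g h ∈ distTriang C) (h0 : f = 0) :
    ∃ (s : A⟦(1 : ℤ)⟧ ⟶ Z) (t : Z ⟶ X), Triangle.mk s t 0 ∈ distTriang C ∧
      g ≫ t = 𝟙 X ∧ IsRetract (A⟦(1 : ℤ)⟧) Z := by
  subst h0
  obtain ⟨s, t, hst, ht, hs⟩ := exists_swapped_split_triangle (X := X) (Y := Z)
    (Z := A⟦(1 : ℤ)⟧) (rot_of_distTriang _ hT)
    (neg_eq_zero.2 (Functor.map_zero (shiftFunctor C (1 : ℤ)) A X))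
  exact ⟨s, t, hst, ht, s, _, hs⟩

/-! ### Complexes concentrated in an interval of degrees -/

/-- `X` is homotopy equivalent to a complex concentrated in degrees `[a, b]`. -/
def ConcIn (a b : ℤ) (X : HomotopyCategory B (ComplexShape.up ℤ)) : Prop :=
  ∃ Y : CochainComplex B ℤ, (∀ i : ℤ, (i < a ∨ b < i) → IsZero (Y.X i)) ∧
    Nonempty (X ≅ (HomotopyCategory.quotient B (ComplexShape.up ℤ)).obj Y)

namespace ConcIn

variable {a b c d : ℤ} {X Y Z : HomotopyCategory B (ComplexShape.up ℤ)}

lemma of_iso (h : ConcIn a b X) (e : Y ≅ X) : ConcIn a b Y := by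
  obtain ⟨K, hK, ⟨e'⟩⟩ := h
  exact ⟨K, hK, ⟨e ≪≫ e'⟩⟩

lemma mono (h : ConcIn a b X) (hc : c ≤ a) (hd : b ≤ d) : ConcIn c d X := by
  obtain ⟨K, hK, he⟩ := h
  exact ⟨K, fun i hi => hK i (by omega), he⟩

lemma shift (h : ConcIn a b X) (n : ℤ) (hc : c = a - n) (hd : d = b - n) :
    ConcIn c d (X⟦n⟧) := by
  obtain ⟨K, hK, ⟨e⟩⟩ := h
  refine ⟨K⟦n⟧, fun i hi => ?_, ⟨(shiftFunctor _ n).mapIso e ≪≫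
    (((HomotopyCategory.quotient B (ComplexShape.up ℤ)).commShiftIso n).app K).symm⟩⟩
  exact hK (i + n) (by omega)

/-- There are no nonzero morphisms from a complex in degrees `≥ a` to one in degrees `< a`. -/
lemma hom_eq_zero (hX : ConcIn a b X) (hY : ConcIn c d Y) (h : d < a) (f : X ⟶ Y) : f = 0 := by
  obtain ⟨K, hK, ⟨e⟩⟩ := hX
  obtain ⟨L, hL, ⟨e'⟩⟩ := hY
  obtain ⟨φ, hφ⟩ := (HomotopyCategory.quotient B (ComplexShape.up ℤ)).map_surjective
    (e.inv ≫ f ≫ e'.hom)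
  have hφ0 : φ = 0 := by
    ext i
    rcases lt_or_ge i a with hi | hi
    · exact (hK i (Or.inl hi)).eq_of_src _ _
    · exact (hL i (Or.inr (by omega))).eq_of_tgt _ _
  rw [hφ0, Functor.map_zero] at hφ
  have : f = e.hom ≫ (e.inv ≫ f ≫ e'.hom) ≫ e'.inv := by simp
  rw [this, ← hφ]; simp

lemma cone {f : X ⟶ Y} {g : Y ⟶ Z} {h : Z ⟶ X⟦(1 : ℤ)⟧}
    (hT : Triangle.mk f g h ∈ distTriang (HomotopyCategory B (ComplexShape.up ℤ)))
    (hX : ConcIn (a + 1) (b + 1) X) (hY : ConcIn a b Y) : ConcIn a b Z := by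
  obtain ⟨K, hK, ⟨e⟩⟩ := hX
  obtain ⟨L, hL, ⟨e'⟩⟩ := hY
  obtain ⟨φ, hφ⟩ := (HomotopyCategory.quotient B (ComplexShape.up ℤ)).map_surjective
    (e.inv ≫ f ≫ e'.hom)
  refine ⟨CochainComplex.mappingCone φ, fun i hi => ?_, ?_⟩
  · rw [IsZero.iff_id_eq_zero, CochainComplex.mappingCone.ext_from_iff φ (i + 1) i rfl]
    exact ⟨(hK (i + 1) (by omega)).eq_of_src _ _, (hL i hi).eq_of_src _ _⟩
  · obtain ⟨E, -, -⟩ := exists_iso_of_arrow_iso _ _ hT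
      (HomotopyCategory.mappingCone_triangleh_distinguished φ)
      (Arrow.isoMk e e' (by
        show e.hom ≫ (HomotopyCategory.quotient B (ComplexShape.up ℤ)).map φ = f ≫ e'.hom
        rw [hφ]; simp))
    exact ⟨Triangle.π₃.mapIso E⟩

lemma fiber {f : X ⟶ Y} {g : Y ⟶ Z} {h : Z ⟶ X⟦(1 : ℤ)⟧}
    (hT : Triangle.mk f g h ∈ distTriang (HomotopyCategory B (ComplexShape.up ℤ)))
    (hY : ConcIn a b Y) (hZ : ConcIn (a - 1) (b - 1) Z) : ConcIn a b X := by
  have h1 : ConcIn (a - 1) (b - 1) (X⟦(1 : ℤ)⟧) :=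
    cone (rot_of_distTriang _ hT) (hY.mono (by omega) (by omega)) hZ
  exact (h1.shift (-1) (c := a) (d := b) (by omega) (by omega)).of_iso
    ((shiftEquiv _ (1 : ℤ)).unitIso.app X)

end ConcIn

/-! ### The stupid filtration -/

/-- The object `M` is split into itself and a zero object, on the side decided by `P`. -/
lemma exists_trivial_splitting (M : B) (P : Prop) :
    ∃ (A Z : B) (f : A ⟶ M) (r : M ⟶ A) (g : M ⟶ Z) (s : Z ⟶ M),
      f ≫ r = 𝟙 A ∧ s ≫ g = 𝟙 Z ∧ r ≫ f + g ≫ s = 𝟙 M ∧ f ≫ g = 0 ∧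
      (P → IsZero Z) ∧ (¬ P → IsZero A) ∧ (IsZero M → IsZero A ∧ IsZero Z) := by
  obtain ⟨O, hO⟩ := HasZeroObject.zero (C := B)
  by_cases hP : P
  · exact ⟨M, O, 𝟙 M, 𝟙 M, 0, 0, by simp, hO.eq_of_src _ _, by simp, by simp, fun _ => hO,
      fun h => absurd hP h, fun h => ⟨h, hO⟩⟩
  · exact ⟨O, M, 0, 0, 𝟙 M, 𝟙 M, hO.eq_of_src _ _, by simp, by simp, by simp,
      fun h => absurd h hP, fun _ => hO, fun h => ⟨hO, h⟩⟩

/-- The stupid filtration: `M` is an extension of its part in degrees `< n` by its part in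
degrees `≥ n`. -/
lemma exists_stupid_triangle (M : CochainComplex B ℤ) (n : ℤ) :
    ∃ (K L : CochainComplex B ℤ)
      (f : (HomotopyCategory.quotient B (ComplexShape.up ℤ)).obj K ⟶
        (HomotopyCategory.quotient B (ComplexShape.up ℤ)).obj M)
      (g : (HomotopyCategory.quotient B (ComplexShape.up ℤ)).obj M ⟶
        (HomotopyCategory.quotient B (ComplexShape.up ℤ)).obj L)
      (h : (HomotopyCategory.quotient B (ComplexShape.up ℤ)).obj L ⟶
        ((HomotopyCategory.quotient B (ComplexShape.up ℤ)).obj K)⟦(1 : ℤ)⟧),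
      Triangle.mk f g h ∈ distTriang (HomotopyCategory B (ComplexShape.up ℤ)) ∧
      (∀ i, i < n → IsZero (K.X i)) ∧ (∀ i, n ≤ i → IsZero (L.X i)) ∧
      (∀ i, IsZero (M.X i) → IsZero (K.X i) ∧ IsZero (L.X i)) := by
  choose A Z f r g s hfr hsg hid hfg hZ hA hM using
    fun i : ℤ => exists_trivial_splitting (M.X i) (n ≤ i)
  -- In each degree one of the two pieces vanishes; since the part in degrees `≥ n` is stable
  -- under the differential, the off-diagonal component `A i ⟶ Z j` of `d` is zero.
  have hfd : ∀ i j, i + 1 = j → f i ≫ M.d i j ≫ g j = 0 := fun i j hij => by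
    by_cases hi : n ≤ i
    · exact (hZ j (by omega)).eq_of_tgt _ _
    · exact (hA i hi).eq_of_src _ _
  have hf : ∀ i j, i + 1 = j → f i ≫ M.d i j ≫ r j ≫ f j = f i ≫ M.d i j := fun i j hij => by
    have : r j ≫ f j = 𝟙 _ - g j ≫ s j := eq_sub_of_add_eq (hid j)
    rw [this]
    simp [reassoc_of% (hfd i j hij)]
  have hg : ∀ i j, i + 1 = j → g i ≫ s i ≫ M.d i j ≫ g j = M.d i j ≫ g j := fun i j hij => by
    have : g i ≫ s i = 𝟙 _ - r i ≫ f i := eq_sub_of_add_eq' (hid i)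
    rw [← Category.assoc, this]
    simp [hfd i j hij]
  let K : CochainComplex B ℤ :=
    { X := A
      d := fun i j => f i ≫ M.d i j ≫ r j
      shape := fun i j hij => by simp [M.shape i j hij]
      d_comp_d' := fun i j k hij hjk => by
        have := hf i j hij
        simp only [Category.assoc]
        rw [reassoc_of% this]
        simp }
  let L : CochainComplex B ℤ :=
    { X := Z
      d := fun i j => s i ≫ M.d i j ≫ g j
      shape := fun i j hij => by simp [M.shape i j hij]
      d_comp_d' := fun i j k hij hjk => by
        simp only [Category.assoc]
        rw [hg j k hjk]
        simp }
  let F : K ⟶ M :=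
    { f := f
      comm' := fun i j hij => by
        simp only [K, Category.assoc]
        rw [hf i j hij] }
  let G : M ⟶ L :=
    { f := g
      comm' := fun i j hij => hg i j hij }
  let S : ShortComplex (CochainComplex B ℤ) := ShortComplex.mk F G (by ext i; exact hfg i)
  let σ : ∀ i, (S.map (HomologicalComplex.eval B _ i)).Splitting := fun i =>
    { r := r i
      s := s i
      f_r := hfr i
      s_g := hsg i
      id := hid i }
  exact ⟨K, L, _, _, _, (HomotopyCategory.distinguished_iff_iso_trianglehOfDegreewiseSplit
      (CochainComplex.trianglehOfDegreewiseSplit S σ)).2 ⟨S, σ, ⟨Iso.refl _⟩⟩,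
    fun i hi => hA i (by omega), fun i hi => hZ i hi, hM⟩

lemma ConcIn.exists_triangle {a b : ℤ} {X : HomotopyCategory B (ComplexShape.up ℤ)}
    (hX : ConcIn a b X) (n : ℤ) :
    ∃ (A Z : HomotopyCategory B (ComplexShape.up ℤ)) (f : A ⟶ X) (g : X ⟶ Z)
      (h : Z ⟶ A⟦(1 : ℤ)⟧),
      Triangle.mk f g h ∈ distTriang (HomotopyCategory B (ComplexShape.up ℤ)) ∧
      ConcIn n b A ∧ ConcIn a (n - 1) Z := by
  obtain ⟨M, hM, ⟨e⟩⟩ := hX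
  obtain ⟨K, L, f, g, h, hT, hK, hL, hKL⟩ := exists_stupid_triangle M n
  refine ⟨_, _, f ≫ e.inv, e.hom ≫ g, h, isomorphic_distinguished _ hT _
    (Triangle.isoMk _ _ (Iso.refl _) e (Iso.refl _) ?_ ?_ ?_),
    ⟨K, ?_, ⟨Iso.refl _⟩⟩, ⟨L, ?_, ⟨Iso.refl _⟩⟩⟩
  · change (f ≫ e.inv) ≫ e.hom = 𝟙 _ ≫ f
    simp
  · change (e.hom ≫ g) ≫ 𝟙 _ = e.hom ≫ g
    simp
  · change h ≫ (shiftFunctor _ (1 : ℤ)).map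
      (𝟙 ((HomotopyCategory.quotient B (ComplexShape.up ℤ)).obj K)) = 𝟙 _ ≫ h
    simp
  · rintro i (hi | hi)
    · exact hK i hi
    · exact (hKL i (hM i (Or.inr hi))).1
  · rintro i (hi | hi)
    · exact (hKL i (hM i (Or.inl hi))).2
    · exact hL i (by omega)

/-! ### Closure under retracts -/

/-- A bounded retract of a complex in degrees `≥ 0` is again homotopy equivalent to such a complex.
Since `B` may have non-split idempotents, one cannot cut `X` down inside itself. Instead, with
`A` and `Z` the parts of `X` in degrees `≥ 0` and `< 0`, orthogonality kills `X ⟶ Z`, so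
`A ≅ X ⊞ Z⟦-1⟧`; the summand `Z⟦-1⟧` is handled by induction on the length of the negative part,
and `X` is the fibre of `A ⟶ Z⟦-1⟧`. -/
lemma ConcIn.retract_nonneg (n : ℕ) : ∀ {b c : ℤ} {X Y : HomotopyCategory B (ComplexShape.up ℤ)},
    ConcIn (-n) b X → ConcIn 0 c Y → IsRetract X Y → ∃ b', ConcIn 0 b' X := by
  induction n with
  | zero => exact fun hX _ _ => ⟨_, by simpa using hX⟩
  | succ n ih =>
    rintro b c X Y hX hY ⟨i, r, hir⟩
    obtain ⟨A, Z, f, g, h, hT, hA, hZ⟩ := hX.exists_triangle 0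
    have hg : g = 0 := by
      rw [← Category.id_comp g, ← hir, Category.assoc, hY.hom_eq_zero hZ (by omega) (r ≫ g),
        comp_zero]
    obtain ⟨s, t, hst, hr⟩ := exists_split_triangle_of_mor₂_eq_zero hT hg
    have hW : ConcIn (-n) 0 (Z⟦(-1 : ℤ)⟧) := hZ.shift (-1) (by push_cast; omega) (by omega)
    obtain ⟨b', hb'⟩ := ih hW hA hr
    exact ⟨max b (b' + 1), ConcIn.fiber hst (hA.mono le_rfl (le_max_left _ _))
      (hb'.mono (by omega) (by omega))⟩

/-- The counterpart of `ConcIn.retract_nonneg` for degrees `≤ 0`: with `A` and `Z` the parts of `X`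
in degrees `> 0` and `≤ 0`, one has `Z ≅ X ⊞ A⟦1⟧`, and `X` is the cone of `A⟦1⟧ ⟶ Z`. -/
lemma ConcIn.retract_nonpos (n : ℕ) : ∀ {a c : ℤ} {X Y : HomotopyCategory B (ComplexShape.up ℤ)},
    ConcIn a n X → ConcIn c 0 Y → IsRetract X Y → ∃ a', ConcIn a' 0 X := by
  induction n with
  | zero => exact fun hX _ _ => ⟨_, by simpa using hX⟩
  | succ n ih =>
    rintro a c X Y hX hY ⟨i, r, hir⟩
    obtain ⟨A, Z, f, g, h, hT, hA, hZ⟩ := hX.exists_triangle 1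
    have hf : f = 0 := by
      rw [← Category.comp_id f, ← hir, ← Category.assoc,
        hA.hom_eq_zero hY (by omega) (f ≫ i), zero_comp]
    obtain ⟨s, t, hst, -, hr⟩ := exists_split_triangle_of_mor₁_eq_zero hT hf
    have hW : ConcIn 0 n (A⟦(1 : ℤ)⟧) := hA.shift 1 (by omega) (by push_cast; omega)
    obtain ⟨a', ha'⟩ := ih hW (hZ.mono le_rfl (by omega)) hr
    exact ⟨min a (a' - 1), ConcIn.cone hst (ha'.mono (by omega) (by omega))
      (hZ.mono (min_le_left _ _) (by omega))⟩

/-! ### Degree zero, and the classes of the weight structure -/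

/-- A complex concentrated in degree `0` comes from an object of `B`. -/
lemma ConcIn.exists_iso_single {X : HomotopyCategory B (ComplexShape.up ℤ)} (hX : ConcIn 0 0 X) :
    ∃ b : B, Nonempty (X ≅ (HomotopyCategory.quotient B (ComplexShape.up ℤ)).obj
      ((HomologicalComplex.single B (ComplexShape.up ℤ) 0).obj b)) := by
  obtain ⟨K, hK, ⟨e⟩⟩ := hX
  let φ : K ⟶ (HomologicalComplex.single B (ComplexShape.up ℤ) 0).obj (K.X 0) :=
    HomologicalComplex.mkHomToSingle (𝟙 _) (fun i hi =>
      (hK i (by simp at hi; omega)).eq_of_src _ _)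
  let ψ : (HomologicalComplex.single B (ComplexShape.up ℤ) 0).obj (K.X 0) ⟶ K :=
    HomologicalComplex.mkHomFromSingle (𝟙 _) (fun i hi =>
      (hK i (by simp at hi; omega)).eq_of_tgt _ _)
  refine ⟨K.X 0, ⟨e ≪≫ (HomotopyCategory.quotient B (ComplexShape.up ℤ)).mapIso
    ⟨φ, ψ, ?_, ?_⟩⟩⟩
  · ext i
    by_cases hi : i = 0
    · subst hi; simp [φ, ψ]
    · exact (hK i (by omega)).eq_of_src _ _
  · apply HomologicalComplex.from_single_hom_ext
    simp [φ, ψ]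

lemma concIn_single (b : B) : ConcIn 0 0 ((HomotopyCategory.quotient B (ComplexShape.up ℤ)).obj
    ((HomologicalComplex.single B (ComplexShape.up ℤ) 0).obj b)) :=
  ⟨_, fun i hi => HomologicalComplex.isZero_single_obj_X _ _ _ _ (by omega), ⟨Iso.refl _⟩⟩

lemma boundedObj.concIn {X : HomotopyCategory B (ComplexShape.up ℤ)} (hX : boundedObj X) :
    ∃ n : ℕ, ConcIn (-n) n X := by
  obtain ⟨a, b, h⟩ := hX
  exact ⟨a.natAbs + b.natAbs, X.as, fun i hi => h i (by omega), ⟨Iso.refl _⟩⟩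

lemma boundedObj.shift {X : HomotopyCategory B (ComplexShape.up ℤ)} (hX : boundedObj X) (n : ℤ) :
    boundedObj (X⟦n⟧) := by
  obtain ⟨K, rfl⟩ := HomotopyCategory.quotient_obj_surjective X
  obtain ⟨a, b, h⟩ := hX
  rw [HomotopyCategory.shift_quotient_obj]
  exact ⟨a - n, b - n, fun i hi => h (i + n) (by omega)⟩

lemma mem_stupidLE_iff {X : HomotopyCategory B (ComplexShape.up ℤ)} :
    X ∈ stupidLE B ↔ boundedObj X ∧ ∃ b, ConcIn 0 b X := by
  constructor
  · rintro ⟨hX, Y, ⟨a, b, hY⟩, hY0, e⟩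
    refine ⟨hX, b, Y, ?_, e⟩
    rintro i (hi | hi)
    · exact hY0 i hi
    · exact hY i (Or.inr hi)
  · rintro ⟨hX, b, Y, hY, e⟩
    exact ⟨hX, Y, ⟨0, b, hY⟩, fun i hi => hY i (Or.inl hi), e⟩

lemma mem_stupidGE_iff {X : HomotopyCategory B (ComplexShape.up ℤ)} :
    X ∈ stupidGE B ↔ boundedObj X ∧ ∃ a, ConcIn a 0 X := by
  constructor
  · rintro ⟨hX, Y, ⟨a, b, hY⟩, hY0, e⟩
    refine ⟨hX, a, Y, ?_, e⟩
    rintro i (hi | hi)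
    · exact hY i (Or.inl hi)
    · exact hY0 i hi
  · rintro ⟨hX, a, Y, hY, e⟩
    exact ⟨hX, Y, ⟨a, 0, hY⟩, fun i hi => hY i (Or.inr hi), e⟩

/-- the pair `(K^b(B)_{w≤0}, K^b(B)_{w≥0})` is a weight structure on the
bounded homotopy category `K^b(B)` (the full triangulated subcategory of bounded
complexes in `K(B)`); it is bounded, and its heart is the Karoubi-closure of `B` in
`K^b(B)`, i.e., the retracts in `K^b(B)` of objects of `B` placed in degree `0`. -/
theorem statement19 :
    IsWeightStructureOn {X : HomotopyCategory B (ComplexShape.up ℤ) | boundedObj X}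
      (stupidLE B) (stupidGE B) ∧
    (∀ X : HomotopyCategory B (ComplexShape.up ℤ), boundedObj X →
      (∃ n : ℤ, X⟦n⟧ ∈ stupidLE B) ∧ (∃ n : ℤ, X⟦n⟧ ∈ stupidGE B)) ∧
    stupidLE B ∩ stupidGE B =
      {X : HomotopyCategory B (ComplexShape.up ℤ) | boundedObj X ∧
        ∃ b : B, IsRetract X ((HomotopyCategory.quotient B (ComplexShape.up ℤ)).obj
          ((HomologicalComplex.single B (ComplexShape.up ℤ) 0).obj b))} := by
  refine ⟨⟨fun X hX => hX.1, fun X hX => hX.1, ?_, ?_, ?_, ?_, ?_, ?_⟩, ?_, ?_⟩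
  · rintro X Y hX hr hY
    obtain ⟨-, c, hY⟩ := mem_stupidLE_iff.1 hY
    obtain ⟨n, hn⟩ := boundedObj.concIn hX
    exact mem_stupidLE_iff.2 ⟨hX, ConcIn.retract_nonneg n hn hY hr⟩
  · rintro X Y hX hr hY
    obtain ⟨-, c, hY⟩ := mem_stupidGE_iff.1 hY
    obtain ⟨n, hn⟩ := boundedObj.concIn hX
    exact mem_stupidGE_iff.2 ⟨hX, ConcIn.retract_nonpos n hn hY hr⟩
  · intro X hX
    obtain ⟨hb, b, hX⟩ := mem_stupidLE_iff.1 hX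
    exact mem_stupidLE_iff.2 ⟨hb.shift _, b + 1,
      (hX.shift (-1) rfl rfl).mono (by omega) (by omega)⟩
  · intro X hX
    obtain ⟨hb, a, hX⟩ := mem_stupidGE_iff.1 hX
    exact mem_stupidGE_iff.2 ⟨hb.shift _, a - 1,
      (hX.shift 1 rfl rfl).mono (by omega) (by omega)⟩
  · intro X Y hX hY f
    obtain ⟨-, b, hX⟩ := mem_stupidLE_iff.1 hX
    obtain ⟨-, a, hY⟩ := mem_stupidGE_iff.1 hY
    exact hX.hom_eq_zero (hY.shift 1 rfl rfl) (by omega) f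
  · rintro M ⟨a, b, hM⟩
    obtain ⟨K, L, f, g, h, hT, hK, hL, hKL⟩ := exists_stupid_triangle M.as 0
    have hK' : ∀ i, (i < 0 ∨ b < i) → IsZero (K.X i) := by
      rintro i (hi | hi)
      · exact hK i hi
      · exact (hKL i (hM i (Or.inr hi))).1
    have hL' : ∀ i, (i < a ∨ -1 < i) → IsZero (L.X i) := by
      rintro i (hi | hi)
      · exact (hKL i (hM i (Or.inl hi))).2
      · exact hL i (by omega)
    have hLc : ConcIn a (-1) ((HomotopyCategory.quotient B (ComplexShape.up ℤ)).obj L) :=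
      ⟨L, hL', ⟨Iso.refl _⟩⟩
    have hLb : boundedObj ((HomotopyCategory.quotient B (ComplexShape.up ℤ)).obj L) :=
      ⟨a, -1, hL'⟩
    exact ⟨_, _, f, g, h, hT,
      mem_stupidLE_iff.2 ⟨⟨0, b, hK'⟩, b, K, hK', ⟨Iso.refl _⟩⟩,
      mem_stupidGE_iff.2 ⟨hLb.shift _, a + 1, hLc.shift (-1) (by omega) (by omega)⟩⟩
  · intro X hX
    obtain ⟨n, hn⟩ := boundedObj.concIn hX
    exact ⟨⟨-n, mem_stupidLE_iff.2 ⟨hX.shift _, _, hn.shift (-n) (by omega) rfl⟩⟩,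
      ⟨n, mem_stupidGE_iff.2 ⟨hX.shift _, _, hn.shift n rfl (by omega)⟩⟩⟩
  · ext X
    constructor
    · rintro ⟨hX₁, hX₂⟩
      obtain ⟨hb, b, hX₁⟩ := mem_stupidLE_iff.1 hX₁
      obtain ⟨-, a, hX₂⟩ := mem_stupidGE_iff.1 hX₂
      -- The part of `X` in degrees `≥ 1` maps to `X` by zero, so `X` is a retract of its
      -- part in degree `0`.
      obtain ⟨A, Z, f, g, h, hT, hA, hZ⟩ := hX₁.exists_triangle 1
      obtain ⟨s, t, -, ht, -⟩ := exists_split_triangle_of_mor₁_eq_zero hT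
        (hA.hom_eq_zero hX₂ (by omega) f)
      obtain ⟨b₀, ⟨e⟩⟩ := ConcIn.exists_iso_single (hZ.mono le_rfl (by omega))
      refine ⟨hb, b₀, g ≫ e.hom, e.inv ≫ t, ?_⟩
      simpa using ht
    · rintro ⟨hb, b, hr⟩
      obtain ⟨n, hn⟩ := boundedObj.concIn hb
      exact ⟨mem_stupidLE_iff.2 ⟨hb, ConcIn.retract_nonneg n hn (concIn_single b) hr⟩,
        mem_stupidGE_iff.2 ⟨hb, ConcIn.retract_nonpos n hn (concIn_single b) hr⟩⟩

end StupidWeightStructure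

end CWH
end
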